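/- arXiv:2101.05373 — 2 statements merged into one kernel-verified Lean document; each statement's English description precedes it below -/
import Mathlib

section
/- Fix η ≥ 1. For every sequence (Σ_n) where Σ_n is an n×n real positive-definite matrix, the limit as n → ∞ of ( Vol(T_η^{(n)}(Σ_n)) / ((2πe)^{n/2}(det Σ_n)^{1/2}) )^{2/n} equals 1 + η. -/
open Matrix MeasureTheory

lemma gamma_lower (x : ℝ) (hx : 0 < x) : (x / Real.exp 1) ^ x ≤ Real.Gamma (x + 1) := by
  rw [Real.Gamma_eq_integral (by linarith)]
  have hint := Real.GammaIntegral_convergent (s := x + 1) (by linarith)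
  have hsub : Set.Ioi x ⊆ Set.Ioi (0:ℝ) := Set.Ioi_subset_Ioi hx.le
  have h1 : ∫ t in Set.Ioi x, Real.exp (-t) * t ^ (x + 1 - 1)
      ≤ ∫ t in Set.Ioi (0:ℝ), Real.exp (-t) * t ^ (x + 1 - 1) := by
    apply setIntegral_mono_set hint
    · filter_upwards [ae_restrict_mem measurableSet_Ioi] with t ht
      have : (0:ℝ) < t := ht
      simp only [Pi.zero_apply]
      positivity
    · exact hsub.eventuallyLE
  refine le_trans ?_ h1
  have h2 : ∫ t in Set.Ioi x, Real.exp (-t) * x ^ x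
      ≤ ∫ t in Set.Ioi x, Real.exp (-t) * t ^ (x + 1 - 1) := by
    apply setIntegral_mono_on
    · exact (integrableOn_exp_neg_Ioi x).mul_const _
    · exact hint.mono_set hsub
    · exact measurableSet_Ioi
    · intro t ht
      have : x < t := ht
      rw [add_sub_cancel_right]
      gcongr
  refine le_trans (le_of_eq ?_) h2
  rw [integral_mul_const, integral_exp_neg_Ioi, Real.div_rpow hx.le (Real.exp_pos 1).le,
    ← Real.exp_mul, one_mul, Real.exp_neg]
  field_simp

lemma gamma_upper (x : ℝ) (hx : 0 < x) :
    Real.Gamma (x + 1) ≤ ((x + 1) / Real.exp 1) ^ x * (x + 1) := by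
  have hx1 : 0 < x + 1 := by linarith
  rw [Real.Gamma_eq_integral (by linarith)]
  have hint := Real.GammaIntegral_convergent (s := x + 1) (by linarith)
  have hneg : -(1 / (x + 1)) < 0 := by
    have : 0 < 1 / (x + 1) := by positivity
    linarith
  have h2 : ∫ t in Set.Ioi (0:ℝ), Real.exp (-t) * t ^ (x + 1 - 1)
      ≤ ∫ t in Set.Ioi (0:ℝ), Real.exp (-(1 / (x + 1)) * t) * ((x + 1) / Real.exp 1) ^ x := by
    apply setIntegral_mono_on
    · exact hint
    · exact (integrableOn_exp_mul_Ioi hneg 0).mul_const _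
    · exact measurableSet_Ioi
    · intro t ht
      have ht : 0 < t := ht
      rw [add_sub_cancel_right, Real.rpow_def_of_pos ht, Real.rpow_def_of_pos (by positivity),
        ← Real.exp_add, ← Real.exp_add, Real.exp_le_exp,
        Real.log_div hx1.ne' (Real.exp_pos 1).ne', Real.log_exp]
      have h := Real.log_le_sub_one_of_pos (x := t / (x + 1)) (by positivity)
      rw [Real.log_div ht.ne' hx1.ne'] at h
      have h' : Real.log t * x ≤ (t / (x + 1) - 1 + Real.log (x + 1)) * x := by
        gcongr; linarith
      have e : t / (x + 1) * x = t - 1 / (x + 1) * t := by field_simp; ring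
      nlinarith
  refine le_trans h2 (le_of_eq ?_)
  rw [integral_mul_const, integral_exp_mul_Ioi hneg]
  simp
  ring

lemma gamma_root_tendsto : Filter.Tendsto
    (fun x : ℝ => (x / Real.exp 1) / (Real.Gamma (x + 1)) ^ (1 / x)) Filter.atTop (nhds 1) := by
  have h0 : Filter.Tendsto (fun y : ℝ => y ^ ((1:ℝ) / (1 * y + (-1)))) Filter.atTop (nhds 1) :=
    tendsto_rpow_div_mul_add 1 1 (-1) (by norm_num)
  have h1 : Filter.Tendsto (fun x : ℝ => (x + 1) ^ (1 / x)) Filter.atTop (nhds 1) := by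
    have := h0.comp (Filter.tendsto_atTop_add_const_right Filter.atTop (1:ℝ) Filter.tendsto_id)
    refine this.congr fun x => ?_
    simp
  have h2 : Filter.Tendsto (fun x : ℝ => 1 + 1 / x) Filter.atTop (nhds 1) := by
    have : Filter.Tendsto (fun x : ℝ => 1 / x) Filter.atTop (nhds 0) := by
      simpa using tendsto_inv_atTop_zero (𝕜 := ℝ)
    simpa using this.const_add 1
  have h3 : Filter.Tendsto (fun x : ℝ => ((1 + 1 / x) * (x + 1) ^ (1 / x))⁻¹)
      Filter.atTop (nhds 1) := by
    simpa using (h2.mul h1).inv₀ (by norm_num)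
  refine tendsto_of_tendsto_of_tendsto_of_le_of_le' h3 tendsto_const_nhds ?_ ?_
  · filter_upwards [Filter.eventually_gt_atTop 0] with x hx
    have hG : 0 < Real.Gamma (x + 1) := Real.Gamma_pos_of_pos (by linarith)
    have h := Real.rpow_le_rpow hG.le (gamma_upper x hx) (z := 1 / x) (by positivity)
    rw [Real.mul_rpow (by positivity) (by positivity), ← Real.rpow_mul (by positivity),
      mul_one_div_cancel hx.ne', Real.rpow_one] at h
    rw [le_div_iff₀ (by positivity), inv_mul_le_iff₀ (by positivity)]
    refine h.trans (le_of_eq ?_)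
    field_simp
  · filter_upwards [Filter.eventually_gt_atTop 0] with x hx
    have hG : 0 < Real.Gamma (x + 1) := Real.Gamma_pos_of_pos (by linarith)
    have h := Real.rpow_le_rpow (by positivity) (gamma_lower x hx) (z := 1 / x) (by positivity)
    rw [← Real.rpow_mul (by positivity), mul_one_div_cancel hx.ne', Real.rpow_one] at h
    rw [div_le_one (by positivity)]
    exact h

lemma vol_ball (n : ℕ) (hn : 0 < n) (r : ℝ) (hr : 0 < r) :
    (volume {x : Fin n → ℝ | x ⬝ᵥ x < r}).toReal =
      (Real.pi * r) ^ ((n : ℝ) / 2) / Real.Gamma ((n : ℝ) / 2 + 1) := by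
  have : Nonempty (Fin n) := ⟨⟨0, hn⟩⟩
  have hset : {x : Fin n → ℝ | x ⬝ᵥ x < r} =
      (MeasurableEquiv.toLp 2 (Fin n → ℝ)) ⁻¹' Metric.ball 0 (Real.sqrt r) := by
    ext x
    simp only [Set.mem_ofPred_eq, Set.mem_preimage, mem_ball_zero_iff]
    rw [EuclideanSpace.norm_eq, Real.sqrt_lt_sqrt_iff (by positivity)]
    simp [dotProduct, sq]
  have hv := (EuclideanSpace.volume_preserving_symm_measurableEquiv_toLp
    (Fin n)).symm.measure_preimage_equiv (Metric.ball 0 (Real.sqrt r))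
  rw [MeasurableEquiv.symm_symm] at hv
  rw [hset, hv,
    EuclideanSpace.volume_ball]
  have hG : 0 < Real.Gamma ((n : ℝ) / 2 + 1) := Real.Gamma_pos_of_pos (by positivity)
  simp only [Fintype.card_fin, ENNReal.toReal_mul, ENNReal.toReal_pow]
  rw [ENNReal.toReal_ofReal (by positivity), ENNReal.toReal_ofReal (by positivity),
    mul_div_assoc', ← mul_pow, mul_comm (Real.sqrt r), ← Real.sqrt_mul Real.pi_pos.le,
    Real.sqrt_eq_rpow, ← Real.rpow_natCast, ← Real.rpow_mul (by positivity)]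
  congr 2
  ring

open scoped MatrixOrder Matrix.Norms.L2Operator in
lemma vol_ellipsoid (n : ℕ) (hn : 0 < n) (r : ℝ) (hr : 0 < r) (S : Matrix (Fin n) (Fin n) ℝ)
    (hS : S.PosDef) :
    (volume {x : Fin n → ℝ | x ⬝ᵥ (S⁻¹ *ᵥ x) < r}).toReal =
      Real.sqrt S.det * ((Real.pi * r) ^ ((n : ℝ) / 2) / Real.Gamma ((n : ℝ) / 2 + 1)) := by
  obtain ⟨R, hR⟩ : ∃ R : Matrix (Fin n) (Fin n) ℝ, S⁻¹ = Rᵀ * R := by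
    obtain ⟨R, hR⟩ := CStarAlgebra.nonneg_iff_eq_star_mul_self.mp hS.inv.posSemidef.nonneg
    exact ⟨R, by simpa [Matrix.star_eq_conjTranspose] using hR⟩
  have hdet : S.det⁻¹ = R.det ^ 2 := by
    have := congrArg Matrix.det hR
    rw [Matrix.det_mul, Matrix.det_transpose, Matrix.det_nonsing_inv, Ring.inverse_eq_inv'] at this
    rw [this, sq]
  have hSd := hS.det_pos
  have hR0 : R.det ≠ 0 := by
    intro h
    rw [h] at hdet
    have : 0 < S.det⁻¹ := inv_pos.mpr hSd
    simp at hdet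
    linarith
  have hset : {x : Fin n → ℝ | x ⬝ᵥ (S⁻¹ *ᵥ x) < r} =
      (Matrix.toLin' R) ⁻¹' {x : Fin n → ℝ | x ⬝ᵥ x < r} := by
    ext x
    simp only [Set.mem_ofPred_eq, Set.mem_preimage, Matrix.toLin'_apply]
    rw [hR, ← Matrix.mulVec_mulVec, Matrix.dotProduct_mulVec, Matrix.vecMul_transpose]
  have hl : LinearMap.det (Matrix.toLin' R) = R.det := LinearMap.det_toLin' R
  rw [hset, Measure.addHaar_preimage_linearMap _ (by rw [hl]; exact hR0), hl, ENNReal.toReal_mul,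
    vol_ball n hn r hr, ENNReal.toReal_ofReal (abs_nonneg _)]
  congr 1
  rw [← Real.sqrt_sq_eq_abs, inv_pow, ← hdet, inv_inv]

/-- For `η ≥ 1` and any sequence `Σ_n` of `n × n` real positive-definite matrices,
`( Vol(T_η^{(n)}(Σ_n)) / ((2πe)^{n/2} (det Σ_n)^{1/2}) )^{2/n} → 1 + η` as `n → ∞`,
where `T_η^{(n)}(Σ) = {a ∈ ℝⁿ : |(1/n)·aᵀΣ⁻¹a − 1| < η}`. -/
theorem stmt8 (η : ℝ) (hη : 1 ≤ η)
    (S : (n : ℕ) → Matrix (Fin n) (Fin n) ℝ) (hS : ∀ n, (S n).PosDef) :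
    Filter.Tendsto (fun n : ℕ =>
      ((volume {a : Fin n → ℝ | |(1 / (n : ℝ)) * (a ⬝ᵥ ((S n)⁻¹ *ᵥ a)) - 1| < η}).toReal
        / ((2 * Real.pi * Real.exp 1) ^ ((n : ℝ) / 2) * Real.sqrt (S n).det))
        ^ (2 / (n : ℝ)))
      Filter.atTop (nhds (1 + η)) := by
  have hlim := (gamma_root_tendsto.comp
    ((tendsto_natCast_atTop_atTop (R := ℝ)).atTop_div_const (r := 2) (by norm_num))).const_mul
      (1 + η)
  rw [mul_one] at hlim
  refine hlim.congr' ?_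
  filter_upwards [Filter.eventually_gt_atTop 0] with n hn
  have hn' : (0:ℝ) < n := by exact_mod_cast hn
  have : Nonempty (Fin n) := ⟨⟨0, hn⟩⟩
  have hr : 0 < (n:ℝ) * (1 + η) := by positivity
  have hae : volume {a : Fin n → ℝ | |(1 / (n : ℝ)) * (a ⬝ᵥ ((S n)⁻¹ *ᵥ a)) - 1| < η}
      = volume {a : Fin n → ℝ | a ⬝ᵥ ((S n)⁻¹ *ᵥ a) < n * (1 + η)} := by
    apply measure_congr
    have h0 : ∀ᵐ a : Fin n → ℝ, a ≠ 0 := by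
      rw [ae_iff]; simp
    filter_upwards [h0] with a ha
    have hq : 0 < a ⬝ᵥ ((S n)⁻¹ *ᵥ a) := by
      simpa using (hS n).inv.dotProduct_mulVec_pos ha
    apply propext
    change |(1 / (n : ℝ)) * (a ⬝ᵥ ((S n)⁻¹ *ᵥ a)) - 1| < η ↔ a ⬝ᵥ ((S n)⁻¹ *ᵥ a) < n * (1 + η)
    have hq' : 0 < (1 / (n : ℝ)) * (a ⬝ᵥ ((S n)⁻¹ *ᵥ a)) := by positivity
    have e : a ⬝ᵥ ((S n)⁻¹ *ᵥ a) < n * (1 + η) ↔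
        (1 / (n : ℝ)) * (a ⬝ᵥ ((S n)⁻¹ *ᵥ a)) < 1 + η := by
      rw [one_div, inv_mul_lt_iff₀ hn']
    rw [e, abs_lt]
    constructor
    · rintro ⟨_, h⟩; linarith
    · intro h; constructor <;> linarith
  rw [hae, vol_ellipsoid n hn _ hr _ (hS n)]
  have hs : 0 < Real.sqrt (S n).det := Real.sqrt_pos.mpr (hS n).det_pos
  have hG : 0 < Real.Gamma ((n : ℝ) / 2 + 1) := Real.Gamma_pos_of_pos (by positivity)
  have he := Real.exp_pos 1
  have hpi := Real.pi_pos
  have e1 : Real.sqrt (S n).det * ((Real.pi * (n * (1 + η))) ^ ((n : ℝ) / 2)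
      / Real.Gamma ((n : ℝ) / 2 + 1)) /
      ((2 * Real.pi * Real.exp 1) ^ ((n : ℝ) / 2) * Real.sqrt (S n).det) =
      ((Real.pi * (n * (1 + η))) / (2 * Real.pi * Real.exp 1)) ^ ((n : ℝ) / 2)
        / Real.Gamma ((n : ℝ) / 2 + 1) := by
    rw [Real.div_rpow (by positivity) (by positivity)]
    field_simp
  rw [e1, Real.div_rpow (by positivity) (by positivity), ← Real.rpow_mul (by positivity)]
  have e2 : (n : ℝ) / 2 * (2 / n) = 1 := by field_simp
  have e3 : 1 / ((n : ℝ) / 2) = 2 / n := by field_simp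
  rw [e2, Real.rpow_one]
  simp only [Function.comp_apply]
  rw [e3]
  field_simp
end

section
/- Let H_c and E be m×n real matrices with spectral norms ‖H_c‖ ≤ β and ‖E‖ ≤ ρ, and suppose the smallest eigenvalue of H_cᵀH_c is at least α² for some α > 0. Let Σ be an n×n real positive-definite matrix, set H := H_c + E, and define φ := ρ(ρ + 2β) · λ_max(Σ) / (1 + α² · λ_min(Σ)). If φ < 1, then det(I_m + HΣHᵀ) ≥ (1 − φ)ⁿ · det(I_m + H_cΣH_cᵀ). -/
open Matrix

/-- The spectral (operator) norm of a real matrix: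
`‖M‖ = max over vectors x with ‖x‖₂ ≤ 1 of ‖M x‖₂`. -/
noncomputable def specNorm {m n : ℕ} (M : Matrix (Fin m) (Fin n) ℝ) : ℝ :=
  sSup {c : ℝ | ∃ x : Fin n → ℝ,
    Real.sqrt (∑ i, x i ^ 2) ≤ 1 ∧ c = Real.sqrt (∑ i, (M *ᵥ x) i ^ 2)}

lemma aux_spec {n : ℕ} {A : Matrix (Fin n) (Fin n) ℝ} (hA : A.IsHermitian) :
    ∃ U : Matrix (Fin n) (Fin n) ℝ, U * Uᵀ = 1 ∧ Uᵀ * U = 1 ∧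
      A = U * diagonal hA.eigenvalues * Uᵀ := by
  refine ⟨hA.eigenvectorUnitary, ?_, ?_, ?_⟩
  · have := Unitary.coe_mul_star_self hA.eigenvectorUnitary
    simpa [star_eq_conjTranspose] using this
  · have := Unitary.coe_star_mul_self hA.eigenvectorUnitary
    simpa [star_eq_conjTranspose] using this
  · have h := hA.spectral_theorem
    rw [Unitary.conjStarAlgAut_apply] at h
    simpa [star_eq_conjTranspose, Function.comp_def] using h

lemma aux_diag {n : ℕ} (U : Matrix (Fin n) (Fin n) ℝ) (d : Fin n → ℝ) (x : Fin n → ℝ) :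
    x ⬝ᵥ ((U * diagonal d * Uᵀ) *ᵥ x) = ∑ i, d i * ((Uᵀ *ᵥ x) i) ^ 2 := by
  rw [← mulVec_mulVec, ← mulVec_mulVec, dotProduct_mulVec, ← mulVec_transpose]
  simp only [dotProduct, mulVec_diagonal]
  exact Finset.sum_congr rfl fun i _ => by ring

lemma aux_norm {n : ℕ} (U : Matrix (Fin n) (Fin n) ℝ) (h : U * Uᵀ = 1) (x : Fin n → ℝ) :
    x ⬝ᵥ x = ∑ i, ((Uᵀ *ᵥ x) i) ^ 2 := by
  have := aux_diag U 1 x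
  rw [show (diagonal (1 : Fin n → ℝ)) = 1 from diagonal_one, mul_one, h, one_mulVec] at this
  simpa using this

lemma aux_ge {n : ℕ} {A : Matrix (Fin n) (Fin n) ℝ} (hA : A.IsHermitian) (c : ℝ)
    (hc : ∀ i, c ≤ hA.eigenvalues i) (x : Fin n → ℝ) : c * (x ⬝ᵥ x) ≤ x ⬝ᵥ (A *ᵥ x) := by
  obtain ⟨U, h1, h2, h3⟩ := aux_spec hA
  generalize hA.eigenvalues = d at *
  subst h3
  rw [aux_diag, aux_norm U h1, Finset.mul_sum]
  exact Finset.sum_le_sum fun i _ => mul_le_mul_of_nonneg_right (hc i) (sq_nonneg _)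

lemma aux_le {n : ℕ} {A : Matrix (Fin n) (Fin n) ℝ} (hA : A.IsHermitian) (c : ℝ)
    (hc : ∀ i, hA.eigenvalues i ≤ c) (x : Fin n → ℝ) : x ⬝ᵥ (A *ᵥ x) ≤ c * (x ⬝ᵥ x) := by
  obtain ⟨U, h1, h2, h3⟩ := aux_spec hA
  generalize hA.eigenvalues = d at *
  subst h3
  rw [aux_diag, aux_norm U h1, Finset.mul_sum]
  exact Finset.sum_le_sum fun i _ => mul_le_mul_of_nonneg_right (hc i) (sq_nonneg _)

lemma aux_one {n : ℕ} {P : Matrix (Fin n) (Fin n) ℝ} (hP : P.PosSemidef) : 1 ≤ (1 + P).det := by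
  have hd := hP.eigenvalues_nonneg
  obtain ⟨U, h1, h2, h3⟩ := aux_spec hP.1
  generalize hP.1.eigenvalues = d at *
  have : 1 + P = U * (1 + diagonal d) * Uᵀ := by
    rw [mul_add, add_mul, mul_one, h1, h3]
  rw [this, det_mul_comm, ← mul_assoc, h2, one_mul, ← diagonal_one, diagonal_add, det_diagonal]
  have := Finset.prod_le_prod (s := Finset.univ) (f := fun _ : Fin n => (1:ℝ))
    (g := fun i => 1 + d i) (fun _ _ => zero_le_one) (fun i _ => by linarith [hd i])
  simpa using this

lemma aux_mono {n : ℕ} {A P : Matrix (Fin n) (Fin n) ℝ} (hA : A.PosDef) (hP : P.PosSemidef) :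
    A.det ≤ (A + P).det := by
  obtain ⟨Q, rfl⟩ : ∃ Q : Matrix (Fin n) (Fin n) ℝ, P = Qᵀ * Q := by
    have hd := hP.eigenvalues_nonneg
    obtain ⟨U, h1, h2, h3⟩ := aux_spec hP.1
    generalize hP.1.eigenvalues = d at *
    refine ⟨diagonal (fun i => √(d i)) * Uᵀ, ?_⟩
    rw [transpose_mul, diagonal_transpose, transpose_transpose, mul_assoc,
      ← mul_assoc (diagonal _) (diagonal _), diagonal_mul_diagonal, ← mul_assoc]
    simp only [Real.mul_self_sqrt (hd _)]
    exact h3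
  have hu : A * A⁻¹ = 1 := mul_nonsing_inv A hA.det_pos.ne'.isUnit
  have : A + Qᵀ * Q = A * (1 + (A⁻¹ * Qᵀ) * Q) := by
    rw [mul_add, mul_one, ← mul_assoc, ← mul_assoc, hu, one_mul]
  rw [this, det_mul, det_one_add_mul_comm]
  have h := aux_one (hA.inv.posSemidef.mul_mul_conjTranspose_same Q)
  rw [conjTranspose_eq_transpose_of_trivial, mul_assoc] at h
  nlinarith [hA.det_pos]

lemma aux_bdd {m n : ℕ} (M : Matrix (Fin m) (Fin n) ℝ) :
    BddAbove {c : ℝ | ∃ x : Fin n → ℝ,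
      Real.sqrt (∑ i, x i ^ 2) ≤ 1 ∧ c = Real.sqrt (∑ i, (M *ᵥ x) i ^ 2)} := by
  refine ⟨√(∑ i, ∑ j, M i j ^ 2), ?_⟩
  rintro c ⟨x, hx, rfl⟩
  apply Real.sqrt_le_sqrt
  apply Finset.sum_le_sum
  intro i _
  have h := Finset.sum_mul_sq_le_sq_mul_sq Finset.univ (fun j => M i j) x
  have hx' : ∑ i, x i ^ 2 ≤ 1 := by simpa using hx
  have h0 : 0 ≤ ∑ j, M i j ^ 2 := Finset.sum_nonneg fun _ _ => sq_nonneg _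
  simp only [mulVec, dotProduct]
  nlinarith

lemma aux_specnonneg {m n : ℕ} (M : Matrix (Fin m) (Fin n) ℝ) : 0 ≤ specNorm M := by
  apply Real.sSup_nonneg
  rintro c ⟨x, hx, rfl⟩
  positivity

lemma aux_bound {m n : ℕ} (M : Matrix (Fin m) (Fin n) ℝ) (b : ℝ) (h : specNorm M ≤ b)
    (x : Fin n → ℝ) : √((M *ᵥ x) ⬝ᵥ (M *ᵥ x)) ≤ b * √(x ⬝ᵥ x) := by
  have e : ∀ {k : ℕ} (y : Fin k → ℝ), y ⬝ᵥ y = ∑ i, y i ^ 2 := fun y => by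
    simp [dotProduct, sq]
  by_cases hx : x = 0
  · simp [hx]
  have hp : 0 < x ⬝ᵥ x := by
    rw [e]
    obtain ⟨i, hi⟩ := Function.ne_iff.mp hx
    exact Finset.sum_pos' (fun _ _ => sq_nonneg _) ⟨i, Finset.mem_univ _, by
      have : x i ≠ 0 := hi
      positivity⟩
  have hs : 0 < √(x ⬝ᵥ x) := Real.sqrt_pos.mpr hp
  have key : √(∑ i, (M *ᵥ ((√(x ⬝ᵥ x))⁻¹ • x)) i ^ 2) ≤ b := by
    refine le_trans (le_csSup (aux_bdd M) ⟨_, ?_, rfl⟩) h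
    rw [← e, dotProduct_smul, smul_dotProduct, smul_eq_mul, smul_eq_mul, ← mul_assoc,
      ← mul_inv, Real.mul_self_sqrt hp.le, inv_mul_cancel₀ hp.ne', Real.sqrt_one]
  rw [← e, mulVec_smul, dotProduct_smul, smul_dotProduct, smul_eq_mul, smul_eq_mul, ← mul_assoc,
    Real.sqrt_mul (by positivity), Real.sqrt_mul_self (by positivity), inv_mul_le_iff₀ hs] at key
  linarith

lemma aux_cs {k : ℕ} (u v : Fin k → ℝ) : -(√(u ⬝ᵥ u) * √(v ⬝ᵥ v)) ≤ u ⬝ᵥ v := by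
  have h := Finset.sum_mul_sq_le_sq_mul_sq Finset.univ u v
  have e : ∀ y : Fin k → ℝ, y ⬝ᵥ y = ∑ i, y i ^ 2 := fun y => by
    simp [dotProduct, sq]
  rw [← e, ← e] at h
  have h0 : 0 ≤ u ⬝ᵥ u := by rw [e]; positivity
  rw [← Real.sqrt_mul h0]
  exact (abs_le.mp (Real.abs_le_sqrt h)).1

lemma aux_inv {n : ℕ} {S : Matrix (Fin n) (Fin n) ℝ} (hS : S.PosDef) (c : ℝ) (hc0 : 0 < c)
    (hc : ∀ i, hS.isHermitian.eigenvalues i ≤ c) (x : Fin n → ℝ) :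
    c⁻¹ * (x ⬝ᵥ x) ≤ x ⬝ᵥ (S⁻¹ *ᵥ x) := by
  have hu : S * S⁻¹ = 1 := mul_nonsing_inv S hS.det_pos.ne'.isUnit
  have h1 := aux_le hS.isHermitian c hc x
  have h2 := hS.posSemidef.dotProduct_mulVec_nonneg (S⁻¹ *ᵥ x - c⁻¹ • x)
  have hT : Sᵀ = S := by
    have := hS.isHermitian.eq
    rwa [conjTranspose_eq_transpose_of_trivial] at this
  have h3 : (S⁻¹ *ᵥ x) ⬝ᵥ (S *ᵥ x) = x ⬝ᵥ x := by
    rw [dotProduct_mulVec, ← mulVec_transpose, hT, mulVec_mulVec, hu, one_mulVec]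
  rw [star_trivial, mulVec_sub, mulVec_mulVec, hu, one_mulVec, mulVec_smul] at h2
  simp only [sub_dotProduct, dotProduct_sub, dotProduct_smul, smul_dotProduct, smul_eq_mul, h3] at h2
  rw [dotProduct_comm (S⁻¹ *ᵥ x) x] at h2
  have h4 : c⁻¹ * (c⁻¹ * (x ⬝ᵥ (S *ᵥ x))) ≤ c⁻¹ * (x ⬝ᵥ x) := by
    apply mul_le_mul_of_nonneg_left _ (by positivity)
    rw [inv_mul_le_iff₀ hc0]
    exact h1
  linarith

lemma aux_det {m n : ℕ} (H : Matrix (Fin m) (Fin n) ℝ) {S : Matrix (Fin n) (Fin n) ℝ}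
    (hS : S.PosDef) : (1 + H * S * Hᵀ).det = S.det * (S⁻¹ + Hᵀ * H).det := by
  have hu : S * S⁻¹ = 1 := mul_nonsing_inv S hS.det_pos.ne'.isUnit
  rw [Matrix.mul_assoc, det_one_add_mul_comm, ← det_mul, mul_add, hu, Matrix.mul_assoc]

/-- Perturbation bound on determinants: if `‖H_c‖ ≤ β`, `‖E‖ ≤ ρ`,
`λ_min(H_cᵀH_c) ≥ α²` with `α > 0`, `Σ ≻ 0`, `H = H_c + E` and
`φ = ρ(ρ+2β)·λ_max(Σ)/(1+α²·λ_min(Σ)) < 1`, then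
`det(I_m + HΣHᵀ) ≥ (1−φ)ⁿ · det(I_m + H_cΣH_cᵀ)`. -/
theorem stmt9 (m n : ℕ) (Hc E : Matrix (Fin m) (Fin n) ℝ) (β ρ α : ℝ) (hα : 0 < α)
    (hHc : specNorm Hc ≤ β) (hE : specNorm E ≤ ρ)
    (hsym : (Hcᵀ * Hc).IsHermitian)
    (heig : ∀ i, α ^ 2 ≤ hsym.eigenvalues i)
    (S : Matrix (Fin n) (Fin n) ℝ) (hS : S.PosDef)
    (φ : ℝ)
    (hφdef : φ = ρ * (ρ + 2 * β) * (⨆ i, hS.isHermitian.eigenvalues i)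
        / (1 + α ^ 2 * (⨅ i, hS.isHermitian.eigenvalues i)))
    (hφ : φ < 1) :
    (1 - φ) ^ n * ((1 : Matrix (Fin m) (Fin m) ℝ) + Hc * S * Hcᵀ).det
      ≤ ((1 : Matrix (Fin m) (Fin m) ℝ) + (Hc + E) * S * (Hc + E)ᵀ).det := by
  rw [aux_det _ hS, aux_det _ hS]
  have hβ : 0 ≤ β := (aux_specnonneg Hc).trans hHc
  have hρ : 0 ≤ ρ := (aux_specnonneg E).trans hE
  have hA : (S⁻¹ + Hcᵀ * Hc).PosDef := by
    refine hS.inv.add_posSemidef ?_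
    simpa using posSemidef_conjTranspose_mul_self Hc
  have hB : (S⁻¹ + (Hc + E)ᵀ * (Hc + E)).PosDef := by
    refine hS.inv.add_posSemidef ?_
    simpa using posSemidef_conjTranspose_mul_self (Hc + E)
  have hA' : ((1 - φ) • (S⁻¹ + Hcᵀ * Hc)).PosDef := hA.smul (by linarith)
  rcases Nat.eq_zero_or_pos n with hn | hn
  · subst hn
    simp
  have : Nonempty (Fin n) := ⟨⟨0, hn⟩⟩
  have hsup : ∀ i, hS.isHermitian.eigenvalues i ≤ ⨆ i, hS.isHermitian.eigenvalues i :=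
    fun i => le_ciSup (Set.finite_range _).bddAbove i
  have hinf : ∀ i, ⨅ i, hS.isHermitian.eigenvalues i ≤ hS.isHermitian.eigenvalues i :=
    fun i => ciInf_le (Set.finite_range _).bddBelow i
  have hinf0 : 0 ≤ ⨅ i, hS.isHermitian.eigenvalues i :=
    le_ciInf fun i => (hS.eigenvalues_pos i).le
  have hinv := aux_inv hS _ ((hS.eigenvalues_pos ⟨0, hn⟩).trans_le (hsup ⟨0, hn⟩)) hsup
  have hL0 := (hS.eigenvalues_pos ⟨0, hn⟩).trans_le (hsup ⟨0, hn⟩)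
  have hlL := (hinf ⟨0, hn⟩).trans (hsup ⟨0, hn⟩)
  generalize (⨆ i, hS.isHermitian.eigenvalues i) = L at *
  generalize (⨅ i, hS.isHermitian.eigenvalues i) = l at *
  have hD : 0 < 1 + α ^ 2 * l := by positivity
  have hφ0 : 0 ≤ φ := by rw [hφdef]; positivity
  have hφk : ρ * (ρ + 2 * β) ≤ φ * (L⁻¹ + α ^ 2) := by
    have h1 : φ * (1 + α ^ 2 * l) = ρ * (ρ + 2 * β) * L := by
      rw [hφdef]; field_simp
    have h2 : φ * (L⁻¹ + α ^ 2) = φ * (1 + α ^ 2 * L) / L := by field_simp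
    rw [h2, le_div_iff₀ hL0, ← h1]
    gcongr
  have hP : ((S⁻¹ + (Hc + E)ᵀ * (Hc + E)) - (1 - φ) • (S⁻¹ + Hcᵀ * Hc)).PosSemidef := by
    refine PosSemidef.of_dotProduct_mulVec_nonneg (hB.1.sub hA'.1) fun x => ?_
    have q : ∀ M : Matrix (Fin m) (Fin n) ℝ,
        x ⬝ᵥ ((Mᵀ * M) *ᵥ x) = (M *ᵥ x) ⬝ᵥ (M *ᵥ x) := fun M => by
      rw [← mulVec_mulVec, dotProduct_mulVec, ← mulVec_transpose, transpose_transpose]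
    have g1 := hinv x
    have g2 := aux_ge hsym _ heig x
    have g3 := aux_bound Hc β hHc x
    have g4 := aux_bound E ρ hE x
    have g5 := aux_cs (Hc *ᵥ x) (E *ᵥ x)
    have nn : ∀ {k : ℕ} (y : Fin k → ℝ), 0 ≤ y ⬝ᵥ y := fun y =>
      Finset.sum_nonneg fun i _ => mul_self_nonneg _
    rw [star_trivial, sub_mulVec, smul_mulVec, add_mulVec, add_mulVec, dotProduct_sub,
      dotProduct_smul, dotProduct_add, dotProduct_add, q, q, add_mulVec, smul_eq_mul]
    rw [q] at g2
    simp only [add_dotProduct, dotProduct_add]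
    rw [dotProduct_comm (E *ᵥ x) (Hc *ᵥ x)]
    have g6 : √((Hc *ᵥ x) ⬝ᵥ (Hc *ᵥ x)) * √((E *ᵥ x) ⬝ᵥ (E *ᵥ x)) ≤ β * ρ * (x ⬝ᵥ x) := by
      calc _ ≤ (β * √(x ⬝ᵥ x)) * (ρ * √(x ⬝ᵥ x)) := by gcongr
        _ = β * ρ * (√(x ⬝ᵥ x) * √(x ⬝ᵥ x)) := by ring
        _ = _ := by rw [Real.mul_self_sqrt (nn x)]
    have g7 := mul_le_mul_of_nonneg_right hφk (nn x)
    have g8 := mul_le_mul_of_nonneg_left (add_le_add g1 g2) hφ0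
    have g9 := nn (E *ᵥ x)
    have g10 : 0 ≤ ρ * ρ * (x ⬝ᵥ x) := mul_nonneg (by positivity) (nn x)
    nlinarith
  have h := aux_mono hA' hP
  rw [add_sub_cancel, det_smul, Fintype.card_fin] at h
  calc _ = S.det * ((1 - φ) ^ n * (S⁻¹ + Hcᵀ * Hc).det) := by ring
    _ ≤ _ := mul_le_mul_of_nonneg_left h hS.det_pos.le
end
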